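/- Let μ be the Haar probability measure on the compact group G = SU(2) × SU(2) × SU(2), and let φ : G → ℝ³ be the map sending (A, B, C) to its spectral invariants (p, q, r), where p = (det(A+B) − 2)/2, q = (det(A+C) − 2)/2, r = (det(B+C) − 2)/2 (these are real numbers). Then the pushforward measure φ∗μ equals the normalized Lebesgue measure on Δ, i.e. φ∗μ = (vol Δ)⁻¹ · (Lebesgue measure on ℝ³ restricted to Δ). -/

import Mathlib

set_option autoImplicit false

open Matrix MeasureTheory

/-- Borel σ-algebra on `2×2` complex matrices. -/
noncomputable instance : MeasurableSpace (Matrix (Fin 2) (Fin 2) ℂ) := borel _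

instance : BorelSpace (Matrix (Fin 2) (Fin 2) ℂ) := ⟨rfl⟩

/-- The body `Δ ⊂ ℝ³`. -/
def DeltaBody : Set (ℝ × ℝ × ℝ) :=
  {x | -1 ≤ x.1 ∧ x.1 ≤ 1 ∧ -1 ≤ x.2.1 ∧ x.2.1 ≤ 1 ∧ -1 ≤ x.2.2 ∧ x.2.2 ≤ 1 ∧
    0 ≤ 1 - x.1 ^ 2 - x.2.1 ^ 2 - x.2.2 ^ 2 + 2 * x.1 * x.2.1 * x.2.2}

/-- The map sending a triple `(A,B,C) ∈ SU(2)³` to its spectral invariants `(p,q,r)`,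
`p = (det(A+B) − 2)/2`, `q = (det(A+C) − 2)/2`, `r = (det(B+C) − 2)/2`. -/
noncomputable def spectralInvariants
    (g : Matrix.specialUnitaryGroup (Fin 2) ℂ × Matrix.specialUnitaryGroup (Fin 2) ℂ ×
      Matrix.specialUnitaryGroup (Fin 2) ℂ) : ℝ × ℝ × ℝ :=
  (((Matrix.det ((g.1 : Matrix (Fin 2) (Fin 2) ℂ) + (g.2.1 : Matrix (Fin 2) (Fin 2) ℂ))).re - 2) / 2,
   ((Matrix.det ((g.1 : Matrix (Fin 2) (Fin 2) ℂ) + (g.2.2 : Matrix (Fin 2) (Fin 2) ℂ))).re - 2) / 2,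
   ((Matrix.det ((g.2.1 : Matrix (Fin 2) (Fin 2) ℂ) + (g.2.2 : Matrix (Fin 2) (Fin 2) ℂ))).re - 2) / 2)

section SUtwo
open scoped ENNReal ComplexConjugate

local notation "SU2" => Matrix.specialUnitaryGroup (Fin 2) ℂ

instance instSCM : SecondCountableTopology (Matrix (Fin 2) (Fin 2) ℂ) :=
  inferInstanceAs (SecondCountableTopology (Fin 2 → Fin 2 → ℂ))

instance instSCK : SecondCountableTopology SU2 :=
  TopologicalSpace.Subtype.secondCountableTopology (SU2 : Set (Matrix (Fin 2) (Fin 2) ℂ))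

instance instCIK : ContinuousInv SU2 :=
  ⟨by
    refine Continuous.subtype_mk (f := fun x : SU2 => star (x : Matrix (Fin 2) (Fin 2) ℂ)) ?_ _
    exact continuous_subtype_val.star⟩

instance instMMK : MeasurableMul₂ SU2 := ⟨continuous_mul.measurable⟩
instance instMIK : MeasurableInv SU2 := ⟨continuous_inv.measurable⟩

lemma su2_inv_val (A : SU2) : ((A⁻¹ : SU2) : Matrix (Fin 2) (Fin 2) ℂ) =
    star (A : Matrix (Fin 2) (Fin 2) ℂ) := rfl

lemma su2_star_adj (A : SU2) : star (A : Matrix (Fin 2) (Fin 2) ℂ) =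
    Matrix.adjugate (A : Matrix (Fin 2) (Fin 2) ℂ) := by
  obtain ⟨A, hA⟩ := A
  rw [Matrix.mem_specialUnitaryGroup_iff] at hA
  obtain ⟨h1, h2⟩ := hA
  have h3 : A * star A = 1 := (Matrix.mem_unitaryGroup_iff).1 h1
  show star A = A.adjugate
  calc star A = (A.adjugate * A) * star A := by rw [Matrix.adjugate_mul, h2]; simp
    _ = A.adjugate := by rw [mul_assoc, h3, mul_one]

lemma su2_11 (A : SU2) : (A : Matrix (Fin 2) (Fin 2) ℂ) 1 1 = conj ((A : Matrix (Fin 2) (Fin 2) ℂ) 0 0) := by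
  have := congrFun (congrFun (su2_star_adj A) 0) 0
  rw [Matrix.adjugate_fin_two] at this
  simpa [Matrix.star_apply] using this.symm

lemma su2_01 (A : SU2) : (A : Matrix (Fin 2) (Fin 2) ℂ) 0 1 = - conj ((A : Matrix (Fin 2) (Fin 2) ℂ) 1 0) := by
  have := congrFun (congrFun (su2_star_adj A) 0) 1
  rw [Matrix.adjugate_fin_two] at this
  simp [Matrix.star_apply] at this
  rw [this]; simp

lemma su2_norm (A : SU2) : Complex.normSq ((A : Matrix (Fin 2) (Fin 2) ℂ) 0 0) +
    Complex.normSq ((A : Matrix (Fin 2) (Fin 2) ℂ) 1 0) = 1 := by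
  have h := ((Matrix.mem_specialUnitaryGroup_iff).1 A.2).2
  rw [Matrix.det_fin_two, su2_11, su2_01] at h
  have h2 := congrArg Complex.re h
  simp [Complex.normSq_apply] at h2 ⊢
  linarith

/-- The matrix with given first column. -/
noncomputable def su2build (u : ℂ × ℂ) : Matrix (Fin 2) (Fin 2) ℂ :=
  !![u.1, - conj u.2; u.2, conj u.1]

lemma su2build_cont : Continuous su2build := by
  refine continuous_matrix ?_
  intro i j
  fin_cases i <;> fin_cases j <;> simp [su2build] <;> fun_prop

lemma su2build_mem (u : ℂ × ℂ) (h : Complex.normSq u.1 + Complex.normSq u.2 = 1) :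
    su2build u ∈ SU2 := by
  have h' : u.1 * conj u.1 + u.2 * conj u.2 = 1 := by
    rw [Complex.mul_conj, Complex.mul_conj]; exact_mod_cast h
  rw [Matrix.mem_specialUnitaryGroup_iff, Matrix.mem_unitaryGroup_iff]
  constructor
  · ext i j
    fin_cases i <;> fin_cases j <;> simp [su2build, Matrix.mul_apply, Fin.sum_univ_two, Matrix.star_apply] <;> first | linear_combination h' | ring
  · rw [Matrix.det_fin_two]; simp [su2build]; linear_combination h'

lemma su2_ext (A B : SU2) (h0 : (A : Matrix (Fin 2) (Fin 2) ℂ) 0 0 = (B : Matrix (Fin 2) (Fin 2) ℂ) 0 0)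
    (h1 : (A : Matrix (Fin 2) (Fin 2) ℂ) 1 0 = (B : Matrix (Fin 2) (Fin 2) ℂ) 1 0) : A = B := by
  ext i j
  fin_cases i <;> fin_cases j
  · exact h0
  · simp [su2_01, h1]
  · exact h1
  · simp [su2_11, h0]

noncomputable def nsq (x : Fin 2 → ℂ) : ℝ := Complex.normSq (x 0) + Complex.normSq (x 1)

lemma nsq_cont : Continuous nsq := by
  unfold nsq
  exact (Complex.continuous_normSq.comp (continuous_apply 0)).add
    (Complex.continuous_normSq.comp (continuous_apply 1))

lemma nsq_pos {x : Fin 2 → ℂ} (h : x ≠ 0) : 0 < nsq x := by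
  unfold nsq
  by_contra hc
  have h0 := Complex.normSq_nonneg (x 0)
  have h1 := Complex.normSq_nonneg (x 1)
  apply h
  ext i
  fin_cases i
  · exact Complex.normSq_eq_zero.1 (show Complex.normSq (x 0) = 0 by linarith)
  · exact Complex.normSq_eq_zero.1 (show Complex.normSq (x 1) = 0 by linarith)

open Classical in
noncomputable def colu (x : Fin 2 → ℂ) : ℂ × ℂ :=
  if x = 0 then (1, 0) else (x 0 / (Real.sqrt (nsq x) : ℝ), x 1 / (Real.sqrt (nsq x) : ℝ))

lemma colu_meas : Measurable colu := by
  unfold colu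
  refine Measurable.ite (measurableSet_singleton 0) measurable_const ?_
  have : Measurable fun x : Fin 2 → ℂ => ((Real.sqrt (nsq x) : ℝ) : ℂ) :=
    (Complex.continuous_ofReal.comp (Real.continuous_sqrt.comp nsq_cont)).measurable
  exact ((measurable_pi_apply 0).div this).prodMk ((measurable_pi_apply 1).div this)

lemma colu_norm (x : Fin 2 → ℂ) : Complex.normSq (colu x).1 + Complex.normSq (colu x).2 = 1 := by
  unfold colu
  split_ifs with h
  · simp
  · have := nsq_pos h
    simp only [Complex.normSq_div, Complex.normSq_ofReal, Real.mul_self_sqrt this.le]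
    rw [← add_div]
    exact div_self this.ne'

noncomputable def colK (x : Fin 2 → ℂ) : SU2 := ⟨su2build (colu x), su2build_mem _ (colu_norm x)⟩

lemma colK_meas : Measurable colK :=
  (su2build_cont.measurable.comp colu_meas).subtype_mk

lemma colK_00 {x : Fin 2 → ℂ} (h : x ≠ 0) : (colK x : Matrix (Fin 2) (Fin 2) ℂ) 0 0 =
    x 0 / (Real.sqrt (nsq x) : ℝ) := by
  simp [colK, su2build, colu, h]

lemma colK_10 {x : Fin 2 → ℂ} (h : x ≠ 0) : (colK x : Matrix (Fin 2) (Fin 2) ℂ) 1 0 =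
    x 1 / (Real.sqrt (nsq x) : ℝ) := by
  simp [colK, su2build, colu, h]

lemma nsq_mulVec (k : SU2) (x : Fin 2 → ℂ) :
    nsq ((k : Matrix (Fin 2) (Fin 2) ℂ) *ᵥ x) = nsq x := by
  have h := su2_norm k
  unfold nsq
  simp only [Matrix.mulVec, dotProduct, Fin.sum_univ_two, su2_11, su2_01]
  simp [Complex.normSq_apply] at h ⊢
  linear_combination ((x 0).re^2+(x 0).im^2+(x 1).re^2+(x 1).im^2) * h

lemma mulVec_ne (k : SU2) {x : Fin 2 → ℂ} (hx : x ≠ 0) :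
    (k : Matrix (Fin 2) (Fin 2) ℂ) *ᵥ x ≠ 0 := by
  intro h
  have h1 := nsq_mulVec k x
  rw [h] at h1
  have := nsq_pos hx
  simp [nsq] at h1 this
  linarith

lemma colK_mul (k : SU2) {x : Fin 2 → ℂ} (hx : x ≠ 0) :
    colK ((k : Matrix (Fin 2) (Fin 2) ℂ) *ᵥ x) = k * colK x := by
  apply su2_ext
  · rw [colK_00 (mulVec_ne k hx), nsq_mulVec]
    show _ = ((k : Matrix (Fin 2) (Fin 2) ℂ) * (colK x : Matrix (Fin 2) (Fin 2) ℂ)) 0 0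
    rw [Matrix.mul_apply, Fin.sum_univ_two, colK_00 hx, colK_10 hx]
    simp only [Matrix.mulVec, dotProduct, Fin.sum_univ_two]
    ring
  · rw [colK_10 (mulVec_ne k hx), nsq_mulVec]
    show _ = ((k : Matrix (Fin 2) (Fin 2) ℂ) * (colK x : Matrix (Fin 2) (Fin 2) ℂ)) 1 0
    rw [Matrix.mul_apply, Fin.sum_univ_two, colK_00 hx, colK_10 hx]
    simp only [Matrix.mulVec, dotProduct, Fin.sum_univ_two]
    ring

lemma mulVec_mp (k : SU2) : MeasurePreserving
    (fun x : Fin 2 → ℂ => (k : Matrix (Fin 2) (Fin 2) ℂ) *ᵥ x) volume volume := by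
  have hdet : LinearMap.det ((Matrix.toLin' (k : Matrix (Fin 2) (Fin 2) ℂ)).restrictScalars ℝ) = 1 := by
    rw [LinearMap.det_restrictScalars, LinearMap.det_toLin',
      ((Matrix.mem_specialUnitaryGroup_iff).1 k.2).2]
    simp
  have h := Measure.map_linearMap_addHaar_eq_smul_addHaar (volume : Measure (Fin 2 → ℂ))
    (f := (Matrix.toLin' (k : Matrix (Fin 2) (Fin 2) ℂ)).restrictScalars ℝ) (by rw [hdet]; exact one_ne_zero)
  rw [hdet] at h
  refine ⟨?_, ?_⟩
  · have : Continuous fun x : Fin 2 → ℂ => (k : Matrix (Fin 2) (Fin 2) ℂ) *ᵥ x := by fun_prop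
    exact this.measurable
  · rw [inv_one, abs_one, ENNReal.ofReal_one, one_smul] at h
    exact h

noncomputable def ballM : Measure (Fin 2 → ℂ) := volume.restrict {x | nsq x < 1}

lemma ballM_mp (k : SU2) : MeasurePreserving
    (fun x : Fin 2 → ℂ => (k : Matrix (Fin 2) (Fin 2) ℂ) *ᵥ x) ballM ballM := by
  have := (mulVec_mp k).restrict_preimage (s := {x | nsq x < 1})
    (isOpen_lt nsq_cont continuous_const).measurableSet
  have e : (fun x : Fin 2 → ℂ => (k : Matrix (Fin 2) (Fin 2) ℂ) *ᵥ x) ⁻¹' {x | nsq x < 1} = {x | nsq x < 1} := by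
    ext x; exact Iff.of_eq (congrArg (· < (1:ℝ)) (nsq_mulVec k x))
  rw [e] at this
  exact this

lemma ballM_univ_ne : ballM Set.univ ≠ 0 := by
  unfold ballM
  rw [Measure.restrict_apply_univ]
  refine (IsOpen.measure_pos volume (isOpen_lt nsq_cont continuous_const) ⟨0, by simp [nsq]⟩).ne'

lemma ballM_univ_ne_top : ballM Set.univ ≠ ⊤ := by
  unfold ballM
  rw [Measure.restrict_apply_univ]
  refine (lt_of_le_of_lt (measure_mono ?_) (measure_ball_lt_top (x := (0 : Fin 2 → ℂ)) (r := 1))).ne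
  intro x hx
  simp only [Set.mem_ofPred_eq, nsq] at hx
  rw [mem_ball_zero_iff, pi_norm_lt_iff one_pos]
  have h0 := Complex.normSq_nonneg (x 0)
  have h1 := Complex.normSq_nonneg (x 1)
  rw [Complex.normSq_eq_norm_sq] at *
  rw [Complex.normSq_eq_norm_sq] at *
  intro i
  fin_cases i
  · simp; nlinarith [norm_nonneg (x 0)]
  · simp; nlinarith [norm_nonneg (x 1)]

instance : IsFiniteMeasure ballM := ⟨lt_top_iff_ne_top.2 ballM_univ_ne_top⟩

lemma ballM_ae_ne : ∀ᵐ x ∂ballM, x ≠ 0 := by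
  refine ae_restrict_of_ae ?_
  exact Measure.ae_ne volume 0

lemma mapcol_inv : (Measure.map colK ballM).IsMulLeftInvariant := by
  refine ⟨fun k => ?_⟩
  rw [Measure.map_map (measurable_const_mul k) colK_meas]
  conv_rhs => rw [← (ballM_mp k).map_eq]
  rw [Measure.map_map colK_meas (ballM_mp k).measurable]
  refine Measure.map_congr ?_
  filter_upwards [ballM_ae_ne] with x hx
  exact (colK_mul k hx).symm

lemma haar_unique {G : Type*} [MeasurableSpace G] [Group G] [MeasurableMul₂ G] [MeasurableInv G]
    (μ ν : Measure G) [IsFiniteMeasure μ] [IsProbabilityMeasure ν] [μ.IsMulLeftInvariant] [ν.IsMulLeftInvariant] :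
    μ = μ Set.univ • ν := by
  have := measure_eq_div_smul μ ν (s := Set.univ) (by simp) (by simp)
  simpa using this

lemma mapcol_eq (η : Measure SU2) [IsProbabilityMeasure η] [η.IsMulLeftInvariant] :
    Measure.map colK ballM = ballM Set.univ • η := by
  have := mapcol_inv
  have := haar_unique (Measure.map colK ballM) η
  rwa [Measure.map_apply colK_meas MeasurableSet.univ, Set.preimage_univ] at this

lemma lint_scale (f : ℂ → ℝ≥0∞) (hf : Measurable f) {r : ℝ} (hr : 0 < r) :
    ∫⁻ w, f w = ENNReal.ofReal (r ^ 2) * ∫⁻ w, f ((r : ℂ) * w) := by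
  have h := Measure.map_addHaar_smul (volume : Measure ℂ) hr.ne'
  have h2 : ∫⁻ w, f ((r : ℂ) * w) = ENNReal.ofReal (r ^ 2)⁻¹ * ∫⁻ w, f w := by
    have h3 : ∫⁻ w, f (r • w) = ∫⁻ w, f w ∂(Measure.map (fun x : ℂ => r • x) volume) :=
      (lintegral_map hf (measurable_const_smul r)).symm
    rw [h, lintegral_smul_measure, Complex.finrank_real_complex, abs_of_pos (by positivity)] at h3
    simpa using h3
  rw [h2, ← mul_assoc, ← ENNReal.ofReal_mul (by positivity), mul_inv_cancel₀ (by positivity)]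
  simp

lemma hasDeriv_sub (r : ℝ) : HasDerivAt (fun r : ℝ => r / Real.sqrt (1 + r ^ 2))
    (1 / ((1 + r ^ 2) * Real.sqrt (1 + r ^ 2))) r := by
  have hp : 0 < 1 + r ^ 2 := by positivity
  have h1 : HasDerivAt (fun r : ℝ => 1 + r ^ 2) (2 * r) r := by
    simpa using (hasDerivAt_pow 2 r).const_add 1
  have h2 := (hasDerivAt_id r).div (h1.sqrt hp.ne') (Real.sqrt_pos.2 hp).ne'
  refine HasDerivAt.congr_deriv (f' := _) h2 ?_
  have hs := Real.sq_sqrt hp.le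
  have hs0 := (Real.sqrt_pos.2 hp).ne'
  show (1 * √(1 + r ^ 2) - r * (2 * r / (2 * √(1 + r ^ 2)))) / √(1 + r ^ 2) ^ 2 = _
  rw [hs]
  field_simp
  rw [hs]
  ring

lemma sub_image : (fun r : ℝ => r / Real.sqrt (1 + r ^ 2)) '' Set.Ioi 0 = Set.Ioo 0 1 := by
  ext t
  simp only [Set.mem_image, Set.mem_Ioi, Set.mem_Ioo]
  constructor
  · rintro ⟨r, hr, rfl⟩
    have hp : 0 < 1 + r ^ 2 := by positivity
    refine ⟨by positivity, ?_⟩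
    rw [div_lt_one (Real.sqrt_pos.2 hp)]
    exact Real.lt_sqrt_of_sq_lt (by linarith)
  · rintro ⟨h0, h1⟩
    have hp : 0 < 1 - t ^ 2 := by nlinarith
    have hs := Real.sqrt_pos.2 hp
    refine ⟨t / Real.sqrt (1 - t ^ 2), by positivity, ?_⟩
    have : 1 + (t / Real.sqrt (1 - t ^ 2)) ^ 2 = (1 / Real.sqrt (1 - t ^ 2)) ^ 2 := by
      rw [div_pow, div_pow, Real.sq_sqrt hp.le]
      field_simp
      ring
    rw [this, Real.sqrt_sq (by positivity)]
    field_simp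

lemma sub_inj : Set.InjOn (fun r : ℝ => r / Real.sqrt (1 + r ^ 2)) (Set.Ioi 0) := by
  intro a ha b hb h
  simp only [Set.mem_Ioi] at ha hb h
  have h2 := congrArg (fun x => x ^ 2) h
  simp only [div_pow] at h2
  rw [Real.sq_sqrt (by positivity), Real.sq_sqrt (by positivity),
    div_eq_div_iff (by positivity) (by positivity)] at h2
  have : a ^ 2 = b ^ 2 := by linarith
  nlinarith

lemma sub_oneD (g : ℝ → ℝ≥0∞) : ∫⁻ t in Set.Ioo (0:ℝ) 1, ENNReal.ofReal t * g t =
    ∫⁻ r in Set.Ioi (0:ℝ), ENNReal.ofReal r * (g (r / Real.sqrt (1 + r ^ 2)) *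
      ENNReal.ofReal (((1 + r ^ 2) ^ 2)⁻¹)) := by
  rw [← sub_image, lintegral_image_eq_lintegral_abs_deriv_mul measurableSet_Ioi
    (fun x _ => (hasDeriv_sub x).hasDerivWithinAt) sub_inj]
  refine setLIntegral_congr_fun measurableSet_Ioi ?_
  intro r hr
  simp only [Set.mem_Ioi] at hr
  have hp : 0 < 1 + r ^ 2 := by positivity
  simp only
  rw [abs_of_pos (by positivity), ← mul_assoc, ← ENNReal.ofReal_mul (by positivity),
    mul_comm (g _), ← mul_assoc, ← ENNReal.ofReal_mul hr.le]
  congr 2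
  have hs := Real.sq_sqrt hp.le
  have hs0 := (Real.sqrt_pos.2 hp).ne'
  field_simp
  rw [hs]

lemma meas_sub : Measurable fun z : ℂ => z / (Real.sqrt (1 + Complex.normSq z) : ℝ) := by
  refine measurable_id.div ?_
  exact (Complex.continuous_ofReal.comp (Real.continuous_sqrt.comp
    (continuous_const.add Complex.continuous_normSq))).measurable

lemma disc_meas : MeasurableSet {z : ℂ | Complex.normSq z < 1} :=
  (isOpen_lt Complex.continuous_normSq continuous_const).measurableSet

lemma lint_polar (f : ℂ → ℝ≥0∞) (hf : Measurable f) : ∫⁻ z, f z =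
    ∫⁻ θ in Set.Ioo (-Real.pi) Real.pi, ∫⁻ r in Set.Ioi (0:ℝ), ENNReal.ofReal r *
      f (r * (Real.cos θ + Real.sin θ * Complex.I)) := by
  rw [← Complex.lintegral_comp_polarCoord_symm, polarCoord_target, Measure.volume_eq_prod,
    ← Measure.prod_restrict]
  simp only [Complex.polarCoord_symm_apply, smul_eq_mul]
  rw [lintegral_prod_symm]
  · refine (Measurable.mul ?_ ?_).aemeasurable
    · fun_prop
    · refine hf.comp ?_
      fun_prop

lemma normSq_polar (r θ : ℝ) : Complex.normSq (r * (Real.cos θ + Real.sin θ * Complex.I)) = r ^ 2 := by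
  simp only [Complex.normSq_apply, Complex.mul_re, Complex.mul_im, Complex.add_re, Complex.add_im,
    Complex.ofReal_re, Complex.ofReal_im, Complex.I_re, Complex.I_im]
  linear_combination r ^ 2 * Real.sin_sq_add_cos_sq θ

lemma polar_sub (F : ℂ → ℝ≥0∞) (hF : Measurable F) :
    ∫⁻ z : ℂ, F (z / (Real.sqrt (1 + Complex.normSq z) : ℝ)) *
      ENNReal.ofReal (((1 + Complex.normSq z) ^ 2)⁻¹) = ∫⁻ z in {z : ℂ | Complex.normSq z < 1}, F z := by
  rw [← lintegral_indicator disc_meas, lint_polar _ (hF.indicator disc_meas), lint_polar]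
  · refine lintegral_congr fun θ => ?_
    simp only [normSq_polar]
    have h1 : ∀ r : ℝ, Set.indicator {z : ℂ | Complex.normSq z < 1} F (r * (Real.cos θ + Real.sin θ * Complex.I))
        = Set.indicator {r : ℝ | r ^ 2 < 1} (fun r : ℝ => F (r * (Real.cos θ + Real.sin θ * Complex.I))) r := by
      intro r
      by_cases h : r ^ 2 < 1
      · have h' : Complex.normSq (r * (Real.cos θ + Real.sin θ * Complex.I)) < 1 := by
          rw [normSq_polar]; exact h
        rw [Set.indicator_of_mem (by exact h'), Set.indicator_of_mem (by exact h)]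
      · rw [Set.indicator_of_notMem, Set.indicator_of_notMem (by exact h)]
        intro h'
        apply h
        have h'' : Complex.normSq (r * (Real.cos θ + Real.sin θ * Complex.I)) < 1 := h'
        rwa [normSq_polar] at h''
    have h2 : ∫⁻ r in Set.Ioi (0:ℝ), ENNReal.ofReal r *
        Set.indicator {z : ℂ | Complex.normSq z < 1} F (r * (Real.cos θ + Real.sin θ * Complex.I))
        = ∫⁻ r in Set.Ioo (0:ℝ) 1, ENNReal.ofReal r * F (r * (Real.cos θ + Real.sin θ * Complex.I)) := by
      rw [← lintegral_indicator measurableSet_Ioi, ← lintegral_indicator measurableSet_Ioo]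
      refine lintegral_congr fun r => ?_
      simp only [h1]
      by_cases h0 : 0 < r
      · by_cases h : r < 1
        · have h' : r ^ 2 < 1 := by nlinarith
          simp only [Set.indicator, Set.mem_Ioi, h0, Set.mem_Ioo, h, and_true, if_true]
          rw [if_pos (by exact h')]
        · have h' : ¬ r ^ 2 < 1 := by nlinarith
          simp only [Set.indicator, Set.mem_Ioi, h0, Set.mem_Ioo, h, and_false, if_false, if_true]
          rw [if_neg (by exact h')]
          simp
      · simp [Set.indicator, h0]
    rw [h2, sub_oneD (fun r => F (r * (Real.cos θ + Real.sin θ * Complex.I)))]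
    refine lintegral_congr fun r => ?_
    congr 3
    push_cast
    ring
  · refine (hF.comp meas_sub).mul ?_
    have := Complex.continuous_normSq.measurable
    fun_prop

noncomputable def Jzero : ℝ≥0∞ :=
  ∫⁻ w : ℂ, ENNReal.ofReal (Complex.normSq w) * (if Complex.normSq w < 1 then 1 else 0)

lemma normSq_meas : Measurable Complex.normSq := Complex.continuous_normSq.measurable

lemma inner_w (z : ℂ) : ∫⁻ w : ℂ, ENNReal.ofReal (Complex.normSq w) *
      (if Complex.normSq w * (1 + Complex.normSq z) < 1 then 1 else 0) =
    ENNReal.ofReal (((1 + Complex.normSq z) ^ 2)⁻¹) * Jzero := by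
  have hp : 0 < 1 + Complex.normSq z := by linarith [Complex.normSq_nonneg z]
  have hs := Real.sqrt_pos.2 hp
  have hsq := Real.sq_sqrt hp.le
  have hm := normSq_meas
  rw [lint_scale _ _ (inv_pos.2 hs)]
  · have h : ∀ w : ℂ, Complex.normSq (((Real.sqrt (1 + Complex.normSq z))⁻¹ : ℝ) * w) =
        (1 + Complex.normSq z)⁻¹ * Complex.normSq w := by
      intro w
      rw [Complex.normSq_mul, Complex.normSq_ofReal, ← sq, inv_pow, hsq]
    simp only [h]
    have h2 : ∀ w : ℂ, ENNReal.ofReal ((1 + Complex.normSq z)⁻¹ * Complex.normSq w) *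
        (if (1 + Complex.normSq z)⁻¹ * Complex.normSq w * (1 + Complex.normSq z) < 1 then (1 : ℝ≥0∞) else 0) =
        ENNReal.ofReal (1 + Complex.normSq z)⁻¹ *
        (ENNReal.ofReal (Complex.normSq w) * (if Complex.normSq w < 1 then 1 else 0)) := by
      intro w
      have e : (1 + Complex.normSq z)⁻¹ * Complex.normSq w * (1 + Complex.normSq z) = Complex.normSq w := by
        field_simp
      rw [e, ENNReal.ofReal_mul (by positivity), mul_assoc]
    simp only [h2]
    rw [lintegral_const_mul', ← mul_assoc, ← ENNReal.ofReal_mul (by positivity), inv_pow, hsq]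
    · congr 2
      field_simp
    · exact ENNReal.ofReal_ne_top
  · refine Measurable.mul (by fun_prop) (Measurable.ite ?_ measurable_const measurable_const)
    exact measurableSet_lt (by fun_prop) measurable_const

lemma inner_z (F : ℂ → ℝ≥0∞) (hF : Measurable F) (w : ℂ) (hw : w ≠ 0) :
    ∫⁻ z : ℂ, (if Complex.normSq z + Complex.normSq w < 1 then
      F (z / (Real.sqrt (Complex.normSq z + Complex.normSq w) : ℝ)) else 0) =
    ∫⁻ z : ℂ, F (z / (Real.sqrt (1 + Complex.normSq z) : ℝ)) * (ENNReal.ofReal (Complex.normSq w) *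
      (if Complex.normSq w * (1 + Complex.normSq z) < 1 then 1 else 0)) := by
  have hn := norm_pos_iff.2 hw
  have hm := normSq_meas
  rw [lint_scale _ _ hn, ← lintegral_const_mul' _ _ ENNReal.ofReal_ne_top]
  · refine lintegral_congr fun z => ?_
    have e : Complex.normSq ((‖w‖ : ℝ) * z) + Complex.normSq w = ‖w‖ ^ 2 * (1 + Complex.normSq z) := by
      rw [Complex.normSq_mul, Complex.normSq_ofReal, Complex.normSq_eq_norm_sq w]; ring
    have e2 : Real.sqrt (‖w‖ ^ 2 * (1 + Complex.normSq z)) = ‖w‖ * Real.sqrt (1 + Complex.normSq z) := by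
      rw [Real.sqrt_mul (by positivity), Real.sqrt_sq hn.le]
    have e3 : ((‖w‖ : ℝ) : ℂ) * z / ((‖w‖ * Real.sqrt (1 + Complex.normSq z) : ℝ) : ℂ) =
        z / (Real.sqrt (1 + Complex.normSq z) : ℝ) := by
      push_cast
      rw [mul_div_mul_left]
      exact_mod_cast hn.ne'
    rw [e, e2, e3, Complex.normSq_eq_norm_sq w]
    split_ifs
    · rw [mul_one, mul_comm]
    · simp
  · refine Measurable.ite ?_ ?_ measurable_const
    · exact measurableSet_lt (by fun_prop) measurable_const
    · refine hF.comp (measurable_id.div ?_)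
      fun_prop

lemma ball_int (F : ℂ → ℝ≥0∞) (hF : Measurable F) :
    ∫⁻ x, F ((colK x : Matrix (Fin 2) (Fin 2) ℂ) 0 0) ∂ballM =
      Jzero * ∫⁻ z in {z : ℂ | Complex.normSq z < 1}, F z := by
  have hm := normSq_meas
  let P : ℂ × ℂ → ℝ≥0∞ := fun p => if Complex.normSq p.1 + Complex.normSq p.2 < 1 then
      F (p.1 / (Real.sqrt (Complex.normSq p.1 + Complex.normSq p.2) : ℝ)) else 0
  have hP : Measurable P := by
    refine Measurable.ite ?_ ?_ measurable_const
    · exact measurableSet_lt (by fun_prop) measurable_const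
    · refine hF.comp (measurable_fst.div ?_)
      fun_prop
  have h1 : ∫⁻ x, F ((colK x : Matrix (Fin 2) (Fin 2) ℂ) 0 0) ∂ballM =
      ∫⁻ x : Fin 2 → ℂ, P (MeasurableEquiv.finTwoArrow x) := by
    unfold ballM
    rw [← lintegral_indicator (isOpen_lt nsq_cont continuous_const).measurableSet]
    refine lintegral_congr_ae ?_
    filter_upwards [Measure.ae_ne volume (0 : Fin 2 → ℂ)] with x hx
    rw [Set.indicator_apply, colK_00 hx]
    rfl
  rw [h1, (volume_preserving_finTwoArrow ℂ).lintegral_comp hP, Measure.volume_eq_prod,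
    lintegral_prod_symm _ hP.aemeasurable]
  have h2 : ∫⁻ w : ℂ, ∫⁻ z : ℂ, P (z, w) = ∫⁻ w : ℂ, ∫⁻ z : ℂ,
      F (z / (Real.sqrt (1 + Complex.normSq z) : ℝ)) * (ENNReal.ofReal (Complex.normSq w) *
      (if Complex.normSq w * (1 + Complex.normSq z) < 1 then 1 else 0)) := by
    refine lintegral_congr_ae ?_
    filter_upwards [Measure.ae_ne volume (0 : ℂ)] with w hw
    exact inner_z F hF w hw
  rw [h2, lintegral_lintegral_swap, ← polar_sub F hF, ← lintegral_const_mul]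
  · refine lintegral_congr fun z => ?_
    rw [lintegral_const_mul, inner_w]
    · ring
    · refine Measurable.mul (by fun_prop) (Measurable.ite ?_ measurable_const measurable_const)
      exact measurableSet_lt (by fun_prop) measurable_const
  · refine (hF.comp meas_sub).mul ?_
    fun_prop
  · refine Measurable.aemeasurable ?_
    refine Measurable.mul (hF.comp (meas_sub.comp measurable_snd)) ?_
    refine Measurable.mul (by fun_prop) (Measurable.ite ?_ measurable_const measurable_const)
    exact measurableSet_lt (by fun_prop) measurable_const

lemma entry_meas (i j : Fin 2) : Measurable fun k : SU2 => (k : Matrix (Fin 2) (Fin 2) ℂ) i j := by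
  have : Continuous fun k : SU2 => (k : Matrix (Fin 2) (Fin 2) ℂ) i j :=
    continuous_subtype_val.matrix_elem i j
  exact this.measurable

/-- The law of the upper left entry under Haar measure is uniform on the disc. -/
lemma law_entry (η : Measure SU2) [IsProbabilityMeasure η] [η.IsMulLeftInvariant]
    (F : ℂ → ℝ≥0∞) (hF : Measurable F) :
    ∫⁻ k, F ((k : Matrix (Fin 2) (Fin 2) ℂ) 0 0) ∂η =
      ((ballM Set.univ)⁻¹ * Jzero) * ∫⁻ z in {z : ℂ | Complex.normSq z < 1}, F z := by
  have h := lintegral_map (μ := ballM) (hF.comp (entry_meas 0 0)) colK_meas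
  rw [mapcol_eq η, lintegral_smul_measure] at h
  have h2 := ball_int F hF
  simp only [Function.comp_def] at h
  rw [h2] at h
  rw [mul_assoc, ← h, smul_eq_mul, ← mul_assoc, ENNReal.inv_mul_cancel ballM_univ_ne ballM_univ_ne_top,
    one_mul]

lemma lint_affine (h : ℝ → ℝ≥0∞) (hh : Measurable h) (a : ℝ) {s : ℝ} (hs : s ≠ 0) :
    ∫⁻ y, h (a + s * y) = ENNReal.ofReal (|s|⁻¹) * ∫⁻ r, h r := by
  have h1 : ∫⁻ y, h (a + s * y) = ∫⁻ t, h (a + t) ∂(Measure.map (fun x : ℝ => s * x) volume) :=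
    (lintegral_map (f := fun t => h (a + t)) (by fun_prop) (measurable_const_mul s)).symm
  rw [h1, Real.map_volume_mul_left hs, lintegral_smul_measure, lintegral_add_left_eq_self, abs_inv,
    smul_eq_mul]

lemma lint_complex (f : ℂ → ℝ≥0∞) (hf : Measurable f) :
    ∫⁻ z, f z = ∫⁻ x : ℝ, ∫⁻ y : ℝ, f ⟨x, y⟩ := by
  rw [← (Complex.volume_preserving_equiv_real_prod.symm).lintegral_comp hf, Measure.volume_eq_prod,
    lintegral_prod]
  · rfl
  · exact (hf.comp Complex.measurableEquivRealProd.symm.measurable).aemeasurable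

/-- The Gram determinant. -/
def gramD (p x r : ℝ) : ℝ := 1 - p ^ 2 - x ^ 2 - r ^ 2 + 2 * p * x * r

noncomputable def slice (F : ℝ × ℝ × ℝ → ℝ≥0∞) (p : ℝ) : ℝ≥0∞ :=
  ∫⁻ x : ℝ, ∫⁻ r : ℝ, (if 0 ≤ gramD p x r then F (p, x, r) else 0)

lemma gramD_cont : Continuous fun q : ℝ × ℝ × ℝ => gramD q.1 q.2.1 q.2.2 := by
  unfold gramD
  fun_prop

lemma slice_int_meas (F : ℝ × ℝ × ℝ → ℝ≥0∞) (hF : Measurable F) :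
    Measurable fun q : ℝ × ℝ × ℝ => if 0 ≤ gramD q.1 q.2.1 q.2.2 then F q else 0 :=
  Measurable.ite (measurableSet_le measurable_const gramD_cont.measurable) hF measurable_const

lemma slice_meas (F : ℝ × ℝ × ℝ → ℝ≥0∞) (hF : Measurable F) : Measurable (slice F) := by
  have h := slice_int_meas F hF
  unfold slice
  refine Measurable.lintegral_prod_right' (f := fun q : ℝ × ℝ => ∫⁻ r : ℝ, (if 0 ≤ gramD q.1 q.2 r then F (q.1, q.2, r) else 0)) ?_
  refine Measurable.lintegral_prod_right' (f := fun q : (ℝ × ℝ) × ℝ => (if 0 ≤ gramD q.1.1 q.1.2 q.2 then F (q.1.1, q.1.2, q.2) else 0)) ?_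
  exact h.comp (g := fun q : ℝ × ℝ × ℝ => if 0 ≤ gramD q.1 q.2.1 q.2.2 then F q else 0)
    (f := fun q : (ℝ × ℝ) × ℝ => (q.1.1, q.1.2, q.2)) (by fun_prop)

lemma disc_slice (F : ℝ × ℝ × ℝ → ℝ≥0∞) (hF : Measurable F) (p s : ℝ) (hps : p ^ 2 + s ^ 2 = 1) (hs : s ≠ 0) :
    ∫⁻ z in {z : ℂ | Complex.normSq z < 1}, F (p, z.re, p * z.re + s * z.im) =
      ENNReal.ofReal ((Real.sqrt (1 - p ^ 2))⁻¹) * slice F p := by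
  have habs : Real.sqrt (1 - p ^ 2) = |s| := by
    rw [← Real.sqrt_sq_eq_abs]; congr 1; linarith
  have hs2 : 0 < s ^ 2 := by positivity
  have hF1 : Measurable fun z : ℂ => F (p, z.re, p * z.re + s * z.im) := by
    have h1 := Complex.measurable_re
    have h2 := Complex.measurable_im
    refine hF.comp ?_
    fun_prop
  rw [← lintegral_indicator disc_meas, lint_complex _ (hF1.indicator disc_meas)]
  unfold slice
  rw [habs, ← lintegral_const_mul' _ _ ENNReal.ofReal_ne_top]
  refine lintegral_congr fun x => ?_
  have hh : Measurable fun r : ℝ => if 0 < gramD p x r then F (p, x, r) else 0 := by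
    refine Measurable.ite (measurableSet_lt measurable_const ?_) (hF.comp (by fun_prop)) measurable_const
    exact (gramD_cont.comp (by fun_prop : Continuous fun r : ℝ => (p, x, r))).measurable
  have h3 : ∫⁻ r : ℝ, (if 0 ≤ gramD p x r then F (p, x, r) else 0) =
      ∫⁻ r : ℝ, (if 0 < gramD p x r then F (p, x, r) else 0) := by
    refine lintegral_congr_ae ?_
    filter_upwards [Measure.ae_ne volume (p * x + Real.sqrt ((1 - p ^ 2) * (1 - x ^ 2))),
      Measure.ae_ne volume (p * x - Real.sqrt ((1 - p ^ 2) * (1 - x ^ 2)))] with r h1 h2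
    have h0 : gramD p x r ≠ 0 := by
      intro h0
      have e : (r - p * x) ^ 2 = (1 - p ^ 2) * (1 - x ^ 2) := by
        unfold gramD at h0; linarith
      have e2 : |r - p * x| = Real.sqrt ((1 - p ^ 2) * (1 - x ^ 2)) := by
        rw [← e, Real.sqrt_sq_eq_abs]
      rcases abs_choice (r - p * x) with h | h
      · apply h1; linarith
      · apply h2; linarith
    by_cases hlt : 0 < gramD p x r
    · rw [if_pos hlt, if_pos hlt.le]
    · rw [if_neg hlt, if_neg]
      intro hle
      exact hlt (lt_of_le_of_ne hle h0.symm)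
  rw [h3, ← lint_affine _ hh (p * x) hs]
  refine lintegral_congr fun y => ?_
  have e : gramD p x (p * x + s * y) = s ^ 2 * (1 - (x ^ 2 + y ^ 2)) := by
    unfold gramD
    linear_combination (x ^ 2 - 1) * hps
  have e2 : Complex.normSq (⟨x, y⟩ : ℂ) = x ^ 2 + y ^ 2 := by
    rw [Complex.normSq_apply]; ring
  rw [Set.indicator_apply, e]
  by_cases hlt : x ^ 2 + y ^ 2 < 1
  · rw [if_pos (by show Complex.normSq (⟨x, y⟩ : ℂ) < 1; rw [e2]; exact hlt), if_pos (by
      have : 0 < 1 - (x ^ 2 + y ^ 2) := by linarith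
      positivity)]
  · rw [if_neg (by show ¬ Complex.normSq (⟨x, y⟩ : ℂ) < 1; rw [e2]; exact hlt), if_neg (by
      push Not at hlt
      nlinarith)]

lemma disc_re (H : ℝ → ℝ≥0∞) (hH : Measurable H) :
    ∫⁻ z in {z : ℂ | Complex.normSq z < 1}, H z.re =
      ∫⁻ x : ℝ, H x * ENNReal.ofReal (2 * Real.sqrt (1 - x ^ 2)) := by
  rw [← lintegral_indicator disc_meas,
    lint_complex _ (Measurable.indicator (f := fun z : ℂ => H z.re) (hH.comp Complex.measurable_re) disc_meas)]
  refine lintegral_congr fun x => ?_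
  have h1 : ∀ y : ℝ, Set.indicator {z : ℂ | Complex.normSq z < 1} (fun z : ℂ => H z.re) ⟨x, y⟩ =
      Set.indicator (Set.Ioo (-Real.sqrt (1 - x ^ 2)) (Real.sqrt (1 - x ^ 2))) (fun _ => H x) y := by
    intro y
    have e : (⟨x, y⟩ : ℂ) ∈ {z : ℂ | Complex.normSq z < 1} ↔
        y ∈ Set.Ioo (-Real.sqrt (1 - x ^ 2)) (Real.sqrt (1 - x ^ 2)) := by
      rw [Set.mem_Ioo, ← abs_lt, Real.lt_sqrt (abs_nonneg y), sq_abs]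
      show Complex.normSq (⟨x, y⟩ : ℂ) < 1 ↔ _
      rw [Complex.normSq_apply]
      constructor <;> intro h <;> simp only at h ⊢ <;> nlinarith
    simp only [Set.indicator_apply, e]
  have h2 : ∫⁻ y : ℝ, Set.indicator {z : ℂ | Complex.normSq z < 1} (fun z : ℂ => H z.re) ⟨x, y⟩ =
      H x * ENNReal.ofReal (2 * Real.sqrt (1 - x ^ 2)) := by
    simp only [h1]
    rw [lintegral_indicator measurableSet_Ioo, setLIntegral_const, Real.volume_Ioo]
    congr 2
    ring
  exact h2

lemma slice_int (F : ℝ × ℝ × ℝ → ℝ≥0∞) (hF : Measurable F) :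
    ∫⁻ p : ℝ, (if p ^ 2 < 1 then slice F p else 0) = ∫⁻ q in DeltaBody, F q := by
  have hD : MeasurableSet DeltaBody := by
    have : IsClosed DeltaBody := by
      unfold DeltaBody
      simp only [Set.ofPred_and]
      repeat' refine IsClosed.inter ?_ ?_
      all_goals exact isClosed_le (by fun_prop) (by fun_prop)
    exact this.measurableSet
  have hm := hF.indicator hD
  rw [← lintegral_indicator hD, Measure.volume_eq_prod, lintegral_prod _ hm.aemeasurable]
  refine lintegral_congr_ae ?_
  filter_upwards [Measure.ae_ne volume (1 : ℝ), Measure.ae_ne volume (-1 : ℝ)] with p hp1 hp2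
  rw [Measure.volume_eq_prod, lintegral_prod (fun y => DeltaBody.indicator F (p, y)) (hm.comp measurable_prodMk_left).aemeasurable]
  by_cases hp : p ^ 2 < 1
  · rw [if_pos hp]
    unfold slice
    refine lintegral_congr fun x => lintegral_congr fun r => ?_
    have e : (p, x, r) ∈ DeltaBody ↔ 0 ≤ gramD p x r := by
      constructor
      · rintro ⟨-, -, -, -, -, -, h⟩
        exact h
      · intro h
        have h' := h
        unfold gramD at h'
        have hx : x ^ 2 ≤ 1 := by
          by_contra hc
          push Not at hc
          nlinarith [sq_nonneg (r - p * x), mul_pos (sub_pos.2 hp) (sub_pos.2 hc)]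
        have hr : r ^ 2 ≤ 1 := by
          by_contra hc
          push Not at hc
          nlinarith [sq_nonneg (x - p * r), mul_pos (sub_pos.2 hp) (sub_pos.2 hc)]
        have hp' := abs_le.1 ((sq_le_one_iff_abs_le_one p).1 hp.le)
        have hx' := abs_le.1 ((sq_le_one_iff_abs_le_one x).1 hx)
        have hr' := abs_le.1 ((sq_le_one_iff_abs_le_one r).1 hr)
        exact ⟨hp'.1, hp'.2, hx'.1, hx'.2, hr'.1, hr'.2, h⟩
    by_cases h : 0 ≤ gramD p x r
    · rw [if_pos h]
      exact (Set.indicator_of_mem (e.2 h) F).symm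
    · rw [if_neg h]
      exact (Set.indicator_of_notMem (fun h' => h (e.1 h')) F).symm
  · rw [if_neg hp]
    symm
    have e : ∀ x r, (p, x, r) ∉ DeltaBody := by
      rintro x r ⟨h1, h2, -⟩
      apply hp
      simp only at h1 h2
      have h1' := lt_of_le_of_ne h1 hp2.symm
      have h2' := lt_of_le_of_ne h2 hp1
      nlinarith
    simp [e]

/-- Real part of the upper left entry (half the trace). -/
noncomputable def reK (k : SU2) : ℝ := ((k : Matrix (Fin 2) (Fin 2) ℂ) 0 0).re

lemma reK_meas : Measurable reK := Complex.measurable_re.comp (entry_meas 0 0)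

lemma reK_trace (k : SU2) : reK k = (Matrix.trace (k : Matrix (Fin 2) (Fin 2) ℂ)).re / 2 := by
  rw [Matrix.trace_fin_two, su2_11, reK]
  simp

lemma reK_conj (g k : SU2) : reK (g⁻¹ * k * g) = reK k := by
  rw [reK_trace, reK_trace]
  have : (((g⁻¹ * k * g : SU2)) : Matrix (Fin 2) (Fin 2) ℂ) = ((g⁻¹ * k : SU2) : Matrix (Fin 2) (Fin 2) ℂ) * (g : Matrix (Fin 2) (Fin 2) ℂ) := rfl
  rw [this, Matrix.trace_mul_comm]
  have h2 : (g : Matrix (Fin 2) (Fin 2) ℂ) * ((g⁻¹ * k : SU2) : Matrix (Fin 2) (Fin 2) ℂ) =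
    ((g * (g⁻¹ * k) : SU2) : Matrix (Fin 2) (Fin 2) ℂ) := rfl
  rw [h2, mul_inv_cancel_left]

lemma inv_mul_00 (A B : SU2) : ((A⁻¹ * B : SU2) : Matrix (Fin 2) (Fin 2) ℂ) 0 0 =
    conj ((A : Matrix (Fin 2) (Fin 2) ℂ) 0 0) * (B : Matrix (Fin 2) (Fin 2) ℂ) 0 0 +
    conj ((A : Matrix (Fin 2) (Fin 2) ℂ) 1 0) * (B : Matrix (Fin 2) (Fin 2) ℂ) 1 0 := by
  show (star (A : Matrix (Fin 2) (Fin 2) ℂ) * (B : Matrix (Fin 2) (Fin 2) ℂ)) 0 0 = _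
  rw [Matrix.mul_apply, Fin.sum_univ_two]
  rfl

lemma det_reK (A B : SU2) : ((Matrix.det ((A : Matrix (Fin 2) (Fin 2) ℂ) +
    (B : Matrix (Fin 2) (Fin 2) ℂ))).re - 2) / 2 = reK (A⁻¹ * B) := by
  have hA := su2_norm A
  have hB := su2_norm B
  rw [reK, inv_mul_00, Matrix.det_fin_two]
  simp only [Matrix.add_apply, su2_11, su2_01]
  simp [Complex.normSq_apply] at hA hB ⊢
  linear_combination hA / 2 + hB / 2

lemma spec_eq (g : SU2 × SU2 × SU2) : spectralInvariants g =
    (reK (g.1⁻¹ * g.2.1), reK (g.1⁻¹ * g.2.2), reK (g.2.1⁻¹ * g.2.2)) := by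
  unfold spectralInvariants
  rw [det_reK, det_reK, det_reK]

lemma spec_meas : Measurable spectralInvariants := by
  have : spectralInvariants = fun g => (reK (g.1⁻¹ * g.2.1), reK (g.1⁻¹ * g.2.2), reK (g.2.1⁻¹ * g.2.2)) :=
    funext spec_eq
  rw [this]
  have h := reK_meas
  fun_prop

lemma exists_diag (b : SU2) : ∃ g : SU2, ((g⁻¹ * b * g : SU2) : Matrix (Fin 2) (Fin 2) ℂ) 1 0 = 0 := by
  obtain ⟨c, hc⟩ := Module.End.exists_eigenvalue (Matrix.toLin' (b : Matrix (Fin 2) (Fin 2) ℂ))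
  obtain ⟨v, hv⟩ := hc.exists_hasEigenvector
  have hv0 := hv.2
  have hbv : (b : Matrix (Fin 2) (Fin 2) ℂ) *ᵥ v = c • v := by
    have := hv.apply_eq_smul
    rwa [Matrix.toLin'_apply] at this
  have h0 := congrFun hbv 0
  have h1 := congrFun hbv 1
  simp only [Matrix.mulVec, dotProduct, Fin.sum_univ_two, Pi.smul_apply, smul_eq_mul] at h0 h1
  refine ⟨colK v, ?_⟩
  have e : (((colK v)⁻¹ * b * colK v : SU2) : Matrix (Fin 2) (Fin 2) ℂ) =
    star (colK v : Matrix (Fin 2) (Fin 2) ℂ) * ((b : Matrix (Fin 2) (Fin 2) ℂ) * (colK v : Matrix (Fin 2) (Fin 2) ℂ)) := by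
    rw [← mul_assoc]; rfl
  rw [e]
  simp only [Matrix.mul_apply, Fin.sum_univ_two, Matrix.star_apply, su2_01, su2_11, colK_00 hv0, colK_10 hv0]
  rw [su2_01, su2_11] at *
  simp
  generalize ((Real.sqrt (nsq v) : ℝ) : ℂ) = N
  linear_combination (-(v 1) / N * h0 / N + (v 0) / N * h1 / N)

section inv
variable (η : Measure SU2) [IsProbabilityMeasure η] [η.IsMulLeftInvariant]

lemma map_right (k : SU2) : Measure.map (fun x => x * k) η = η := by
  have hp : IsProbabilityMeasure (Measure.map (fun x => x * k) η) :=
    Measure.isProbabilityMeasure_map (measurable_mul_const k).aemeasurable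
  have hi : (Measure.map (fun x => x * k) η).IsMulLeftInvariant := by
    refine ⟨fun g => ?_⟩
    rw [Measure.map_map (measurable_const_mul g) (measurable_mul_const k)]
    conv_rhs => rw [← map_mul_left_eq_self η g]
    rw [Measure.map_map (measurable_mul_const k) (measurable_const_mul g)]
    congr 1
    ext x : 1
    simp [mul_assoc]
  have := haar_unique (Measure.map (fun x => x * k) η) η
  rwa [hp.measure_univ, one_smul] at this

lemma lint_conj (f : SU2 → ℝ≥0∞) (hf : Measurable f) (g : SU2) :
    ∫⁻ c, f (g⁻¹ * c * g) ∂η = ∫⁻ c, f c ∂η := by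
  have h1 : ∫⁻ c, f (g⁻¹ * c * g) ∂η = ∫⁻ c, f (c * g) ∂η :=
    lintegral_mul_left_eq_self (fun c => f (c * g)) g⁻¹
  rw [h1, ← lintegral_map hf (measurable_mul_const g), map_right]

noncomputable def Ccst : ℝ≥0∞ := (ballM Set.univ)⁻¹ * Jzero

lemma inner_c (F : ℝ × ℝ × ℝ → ℝ≥0∞) (hF : Measurable F) (b : SU2) (hb : reK b ^ 2 < 1) :
    ∫⁻ c, F (reK b, reK c, reK (b⁻¹ * c)) ∂η =
      Ccst * (ENNReal.ofReal ((Real.sqrt (1 - reK b ^ 2))⁻¹) * slice F (reK b)) := by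
  obtain ⟨g, hg⟩ := exists_diag b
  have hR := reK_meas
  set d : SU2 := g⁻¹ * b * g with hd
  have hn := su2_norm d
  rw [hg, map_zero, add_zero, Complex.normSq_apply] at hn
  have hre : reK b = ((d : Matrix (Fin 2) (Fin 2) ℂ) 0 0).re := (reK_conj g b).symm
  have h1 : ∀ c, F (reK b, reK c, reK (b⁻¹ * c)) =
      (fun c' => F (reK b, reK c', reK (d⁻¹ * c'))) (g⁻¹ * c * g) := by
    intro c
    have e : d⁻¹ * (g⁻¹ * c * g) = g⁻¹ * (b⁻¹ * c) * g := by rw [hd]; group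
    simp only [e, reK_conj]
  simp only [h1]
  rw [lint_conj η (fun c' => F (reK b, reK c', reK (d⁻¹ * c'))) (by fun_prop) g]
  have h2 : ∀ c : SU2, F (reK b, reK c, reK (d⁻¹ * c)) =
      (fun z : ℂ => F (reK b, z.re, reK b * z.re + ((d : Matrix (Fin 2) (Fin 2) ℂ) 0 0).im * z.im))
        ((c : Matrix (Fin 2) (Fin 2) ℂ) 0 0) := by
    intro c
    have e : reK (d⁻¹ * c) = reK b * ((c : Matrix (Fin 2) (Fin 2) ℂ) 0 0).re +
        ((d : Matrix (Fin 2) (Fin 2) ℂ) 0 0).im * ((c : Matrix (Fin 2) (Fin 2) ℂ) 0 0).im := by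
      rw [hre, reK, inv_mul_00, hg]
      simp
    simp only [e]
    rfl
  rw [lintegral_congr h2, law_entry η
    (fun z : ℂ => F (reK b, z.re, reK b * z.re + ((d : Matrix (Fin 2) (Fin 2) ℂ) 0 0).im * z.im))]
  · rw [disc_slice F hF]
    · rfl
    · rw [hre]; linarith
    · intro h0
      rw [h0, ← hre] at hn
      nlinarith
  · have h3 := Complex.measurable_re
    have h4 := Complex.measurable_im
    fun_prop

lemma law_re (H : ℝ → ℝ≥0∞) (hH : Measurable H) :
    ∫⁻ k, H (reK k) ∂η = Ccst * ∫⁻ x : ℝ, H x * ENNReal.ofReal (2 * Real.sqrt (1 - x ^ 2)) := by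
  rw [← disc_re H hH]
  exact law_entry η (fun z => H z.re) (hH.comp Complex.measurable_re)

lemma ae_re : ∀ᵐ b ∂η, reK b ^ 2 < 1 := by
  have hs : MeasurableSet {x : ℝ | ¬ x ^ 2 < 1} := (measurableSet_lt (measurable_id.pow_const 2) measurable_const).compl
  have h := law_re η (Set.indicator {x : ℝ | ¬ x ^ 2 < 1} 1) (measurable_one.indicator hs)
  have h0 : ∀ x : ℝ, Set.indicator {x : ℝ | ¬ x ^ 2 < 1} (1 : ℝ → ℝ≥0∞) x *
      ENNReal.ofReal (2 * Real.sqrt (1 - x ^ 2)) = 0 := by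
    intro x
    by_cases hx : x ^ 2 < 1
    · rw [Set.indicator_of_notMem (by exact fun h => h hx), zero_mul]
    · rw [Real.sqrt_eq_zero_of_nonpos (by linarith)]
      simp
  simp only [h0, lintegral_zero, mul_zero] at h
  rw [lintegral_eq_zero_iff (f := fun k => Set.indicator {x : ℝ | ¬ x ^ 2 < 1} 1 (reK k)) ((measurable_one.indicator hs).comp reK_meas)] at h
  filter_upwards [h] with b hb
  by_contra hc
  simp at hb
  exact hc ((sq_lt_one_iff_abs_lt_one _).2 hb)

lemma inner_bc (F : ℝ × ℝ × ℝ → ℝ≥0∞) (hF : Measurable F) :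
    ∫⁻ b, ∫⁻ c, F (reK b, reK c, reK (b⁻¹ * c)) ∂η ∂η =
      (Ccst * (Ccst * 2)) * ∫⁻ q in DeltaBody, F q := by
  have hS := slice_meas F hF
  let H : ℝ → ℝ≥0∞ := fun p => if p ^ 2 < 1 then
    Ccst * (ENNReal.ofReal ((Real.sqrt (1 - p ^ 2))⁻¹) * slice F p) else 0
  have hH : Measurable H := by
    refine Measurable.ite (measurableSet_lt (measurable_id.pow_const 2) measurable_const) ?_ measurable_const
    fun_prop
  have h1 : ∫⁻ b, ∫⁻ c, F (reK b, reK c, reK (b⁻¹ * c)) ∂η ∂η = ∫⁻ b, H (reK b) ∂η := by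
    refine lintegral_congr_ae ?_
    filter_upwards [ae_re η] with b hb
    rw [inner_c η F hF b hb]
    simp only [H, if_pos hb]
  rw [h1, law_re η H hH, ← slice_int F hF, mul_assoc, ← lintegral_const_mul (Ccst * 2)]
  · congr 1
    refine lintegral_congr fun p => ?_
    by_cases hp : p ^ 2 < 1
    · simp only [H, if_pos hp]
      have hs : 0 < Real.sqrt (1 - p ^ 2) := Real.sqrt_pos.2 (by linarith)
      have e : ENNReal.ofReal ((Real.sqrt (1 - p ^ 2))⁻¹) * ENNReal.ofReal (2 * Real.sqrt (1 - p ^ 2)) = 2 := by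
        rw [← ENNReal.ofReal_mul (by positivity)]
        have : (Real.sqrt (1 - p ^ 2))⁻¹ * (2 * Real.sqrt (1 - p ^ 2)) = 2 := by field_simp
        rw [this]; simp
      rw [← e]; ring
    · simp only [H, if_neg hp]; simp
  · exact Measurable.ite (measurableSet_lt (measurable_id.pow_const 2) measurable_const) hS measurable_const

lemma full_int (F : ℝ × ℝ × ℝ → ℝ≥0∞) (hF : Measurable F) :
    ∫⁻ g, F (spectralInvariants g) ∂(η.prod (η.prod η)) =
      (Ccst * (Ccst * 2)) * ∫⁻ q in DeltaBody, F q := by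
  have hR := reK_meas
  have hm : Measurable fun g : SU2 × SU2 × SU2 => F (spectralInvariants g) := hF.comp spec_meas
  rw [lintegral_prod _ hm.aemeasurable]
  have h : ∀ a : SU2, ∫⁻ y, F (spectralInvariants (a, y)) ∂(η.prod η) =
      (Ccst * (Ccst * 2)) * ∫⁻ q in DeltaBody, F q := by
    intro a
    rw [lintegral_prod (fun y => F (spectralInvariants (a, y))) (hm.comp measurable_prodMk_left).aemeasurable, ← inner_bc η F hF]
    rw [← lintegral_mul_left_eq_self (fun b => ∫⁻ c, F (reK b, reK c, reK (b⁻¹ * c)) ∂η) a⁻¹]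
    refine lintegral_congr fun b => ?_
    rw [← lintegral_mul_left_eq_self (fun c => F (reK (a⁻¹ * b), reK c, reK ((a⁻¹ * b)⁻¹ * c))) a⁻¹]
    refine lintegral_congr fun c => ?_
    rw [spec_eq]
    have e : (a⁻¹ * b)⁻¹ * (a⁻¹ * c) = b⁻¹ * c := by group
    simp only [e]
  simp only [h, lintegral_const, measure_univ, mul_one]

end inv

lemma final_eq (μ : Measure (SU2 × SU2 × SU2)) [IsProbabilityMeasure μ]
    (hinv : ∀ g : SU2 × SU2 × SU2, Measure.map (fun x => g * x) μ = μ) :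
    Measure.map spectralInvariants μ = (volume DeltaBody)⁻¹ • volume.restrict DeltaBody := by
  have hμ : μ.IsMulLeftInvariant := ⟨hinv⟩
  let η : Measure SU2 := Measure.map Prod.fst μ
  have hη : IsProbabilityMeasure η := Measure.isProbabilityMeasure_map measurable_fst.aemeasurable
  have hηi : η.IsMulLeftInvariant := by
    refine ⟨fun k => ?_⟩
    show Measure.map (fun x => k * x) (Measure.map Prod.fst μ) = Measure.map Prod.fst μ
    rw [Measure.map_map (measurable_const_mul k) measurable_fst]
    conv_rhs => rw [← hinv (k, 1, 1)]
    rw [Measure.map_map measurable_fst (measurable_const_mul _)]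
    rfl
  have hprod : μ = η.prod (η.prod η) := by
    have hi2 : (η.prod η).IsMulLeftInvariant := Measure.prod.instIsMulLeftInvariant
    have hi3 : (η.prod (η.prod η)).IsMulLeftInvariant := Measure.prod.instIsMulLeftInvariant
    have := haar_unique μ (η.prod (η.prod η))
    rwa [measure_univ, one_smul] at this
  have hmap : Measure.map spectralInvariants μ = (Ccst * (Ccst * 2)) • volume.restrict DeltaBody := by
    refine Measure.ext_of_lintegral _ fun F hF => ?_
    rw [lintegral_map hF spec_meas, lintegral_smul_measure, hprod, full_int η F hF, smul_eq_mul]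
  have huniv : Ccst * (Ccst * 2) * volume DeltaBody = 1 := by
    have h1 : (Measure.map spectralInvariants μ) Set.univ = 1 := by
      rw [Measure.map_apply spec_meas MeasurableSet.univ, Set.preimage_univ, measure_univ]
    rw [hmap] at h1
    simpa using h1
  rw [hmap, ENNReal.eq_inv_of_mul_eq_one_left huniv]

end SUtwo

/-- the pushforward of the Haar probability measure on `G = SU(2)³` under the
spectral-invariants map is the normalized Lebesgue measure on the body `Δ`.
(The Haar probability measure is characterized as a translation-invariant probability
measure on the compact group `G`.) -/
theorem pushforward_Haar_is_normalized_Lebesgue_on_Delta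
    (μ : Measure (Matrix.specialUnitaryGroup (Fin 2) ℂ × Matrix.specialUnitaryGroup (Fin 2) ℂ ×
      Matrix.specialUnitaryGroup (Fin 2) ℂ))
    [IsProbabilityMeasure μ]
    (hinv : ∀ g : Matrix.specialUnitaryGroup (Fin 2) ℂ × Matrix.specialUnitaryGroup (Fin 2) ℂ ×
      Matrix.specialUnitaryGroup (Fin 2) ℂ, Measure.map (fun x => g * x) μ = μ) :
    Measure.map spectralInvariants μ = (volume DeltaBody)⁻¹ • volume.restrict DeltaBody := by
  exact final_eq μ hinv
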